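/- arXiv:1303.3345 — 2 statements merged into one kernel-verified Lean document; each statement's English description precedes it below -/
import Mathlib

section
/- Assume the base hypotheses and Condition (M). Suppose f∘F⁻¹ ∈ RV_∞(-1), F⁻¹ ∈ RV_∞(0), and there exists L > 0 such that lim_{t→∞} g(t)/(f∘F⁻¹)(t) = L. Then the unique continuous solution x of x'(t) = -f(x(t)) + g(t), x(0) = ξ > 0, satisfies x(t) → 0 as t → ∞ and lim_{t→∞} F(x(t))/t = 1/(L+1). -/
open Filter Real Set Topology MeasureTheory

noncomputable section

/-- A function `f : (0,∞) → (0,∞)` is regularly varying at `0` with index `β` if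
`f(λx)/f(x) → λ^β` as `x → 0⁺` for every `λ > 0`. -/
def RVat0 (f : ℝ → ℝ) (β : ℝ) : Prop :=
  ∀ lam : ℝ, 0 < lam →
    Tendsto (fun x => f (lam * x) / f x) (nhdsWithin 0 (Set.Ioi 0)) (nhds (lam ^ β))

/-- A function `h : (0,∞) → (0,∞)` is regularly varying at `∞` with index `α` if
`h(λt)/h(t) → λ^α` as `t → ∞` for every `λ > 0`. -/
def RVatInf (h : ℝ → ℝ) (α : ℝ) : Prop :=
  ∀ lam : ℝ, 0 < lam →
    Tendsto (fun t => h (lam * t) / h t) atTop (nhds (lam ^ α))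

/-- A continuous solution of the perturbed ODE `x'(t) = -f(x(t)) + g(t)`, `t > 0`,
with initial condition `x(0) = ξ`. -/
def IsSol (f g : ℝ → ℝ) (ξ : ℝ) (x : ℝ → ℝ) : Prop :=
  ContinuousOn x (Set.Ici 0) ∧ x 0 = ξ ∧
    ∀ t : ℝ, 0 < t → HasDerivAt x (-f (x t) + g t) t


/-- Barrier lemma: if `z` strictly decreases (uniformly) whenever it is nonnegative,
then it is eventually nonpositive. -/
lemma aux_barrier (z z' : ℝ → ℝ) (c T : ℝ) (hc : 0 < c)
    (hz : ∀ t, T < t → HasDerivAt z (z' t) t)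
    (hd : ∀ t, T < t → 0 ≤ z t → z' t ≤ -c) : ∀ᶠ t in atTop, z t ≤ 0 := by
  have h1 : ∃ t1, T < t1 ∧ z t1 ≤ 0 := by
    by_contra hcon
    push Not at hcon
    have key : ∀ t, T + 1 ≤ t → z t ≤ z (T+1) - c * (t - (T+1)) := by
      intro t ht
      have := image_le_of_deriv_right_le_deriv_boundary (f := z) (f' := z') (a := T+1) (b := t)
        (B := fun s => z (T+1) - c * (s - (T+1))) (B' := fun _ => -c)
        (fun s hs => (hz s (by linarith [hs.1])).continuousAt.continuousWithinAt)
        (fun s hs => (hz s (by linarith [hs.1])).hasDerivWithinAt)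
        (by simp) (by fun_prop)
        (fun s hs => by
          have h : HasDerivAt (fun s : ℝ => z (T+1) - c * (s - (T+1))) (-c) s := by
            have := (((hasDerivAt_id s).sub_const (T+1)).const_mul c).const_sub (z (T+1))
            simpa using this
          exact h.hasDerivWithinAt)
        (fun s hs => hd s (by linarith [hs.1]) (hcon s (by linarith [hs.1])).le)
      exact this ⟨ht, le_rfl⟩
    have h0 := hcon (T+1) (by linarith)
    have hq : 0 < z (T+1) / c := by positivity
    have h2 := key (T + 1 + z (T+1) / c) (by linarith)
    have h3 := hcon (T + 1 + z (T+1) / c) (by linarith)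
    have h4 : c * (T + 1 + z (T+1) / c - (T+1)) = z (T+1) := by field_simp; ring
    linarith
  obtain ⟨t1, ht1, hz1⟩ := h1
  filter_upwards [eventually_ge_atTop t1] with t ht
  have := image_le_of_deriv_right_lt_deriv_boundary' (f := z) (f' := z') (a := t1) (b := t)
        (B := fun _ => 0) (B' := fun _ => 0)
        (fun s hs => (hz s (by linarith [hs.1])).continuousAt.continuousWithinAt)
        (fun s hs => (hz s (by linarith [hs.1])).hasDerivWithinAt)
        hz1 (by fun_prop)
        (fun s hs => (hasDerivAt_const s (0:ℝ)).hasDerivWithinAt)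
        (fun s hs h => by have := hd s (by linarith [hs.1]) h.ge; linarith)
  exact this ⟨ht, le_rfl⟩

/-- Almost-monotonicity of `f` near zero from Condition (M). -/
lemma aux_mono (f : ℝ → ℝ) (hfpos : ∀ y, 0 < y → 0 < f y)
    (hM : ∃ δ : ℝ, 0 < δ ∧ ∃ φ : ℝ → ℝ, StrictMonoOn φ (Set.Ioo 0 δ) ∧
      Tendsto (fun y => f y / φ y) (nhdsWithin 0 (Set.Ioi 0)) (nhds 1))
    (η : ℝ) (hη : 0 < η) :
    ∃ d, 0 < d ∧ ∀ u v, 0 < u → u ≤ v → v < d → f u ≤ (1 + η) * f v := by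
  obtain ⟨δ, hδ, φ, hφ, hlim⟩ := hM
  set r := 1 + η with hr
  have hr1 : 1 < r := by linarith
  have hs : 1 < √r := by
    rw [Real.lt_sqrt (by norm_num)]; linarith
  have hss : √r * √r = r := Real.mul_self_sqrt (by linarith)
  have e1 := hlim.eventually (Ioo_mem_nhds (a := (√r)⁻¹) (b := √r) (inv_lt_one_of_one_lt₀ hs) hs)
  obtain ⟨d, hd, hd'⟩ := (mem_nhdsGT_iff_exists_Ioo_subset.1 e1)
  have hd0 : (0:ℝ) < d := hd
  have P : ∀ y, 0 < y → y < d → f y ≤ √r * φ y ∧ φ y ≤ √r * f y := by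
    intro y hy hyd
    obtain ⟨h1, h2⟩ := hd' ⟨hy, hyd⟩
    have hf := hfpos y hy
    have hpos : 0 < f y / φ y := lt_trans (by positivity) h1
    have hφy : 0 < φ y := by
      by_contra hcon
      exact absurd hpos (not_lt.2 (div_nonpos_of_nonneg_of_nonpos hf.le (not_lt.1 hcon)))
    rw [div_lt_iff₀ hφy] at h2
    rw [lt_div_iff₀ hφy, inv_mul_lt_iff₀ (by linarith)] at h1
    exact ⟨h2.le, h1.le⟩
  refine ⟨min d δ, lt_min hd0 hδ, fun u v hu huv hv => ?_⟩
  have hvd := lt_of_lt_of_le hv (min_le_left _ _)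
  have hvδ := lt_of_lt_of_le hv (min_le_right _ _)
  have h1 := (P u hu (by linarith)).1
  have h2 := (P v (by linarith) hvd).2
  have h3 : φ u ≤ φ v := hφ.monotoneOn ⟨hu, by linarith⟩ ⟨by linarith, hvδ⟩ huv
  calc f u ≤ √r * φ u := h1
    _ ≤ √r * (√r * f v) := by gcongr; exact h3.trans h2
    _ = r * f v := by rw [← mul_assoc, hss]

lemma aux_Fderiv (f F : ℝ → ℝ) (hf_cont : Continuous f) (hfpos : ∀ y, 0 < y → 0 < f y)
    (hF : ∀ y : ℝ, 0 < y → F y = ∫ u in y..(1:ℝ), 1 / f u) (y : ℝ) (hy : 0 < y) :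
    HasDerivAt F (-(1 / f y)) y := by
  have hc : ContinuousOn (fun u => 1 / f u) (Ioi 0) :=
    continuousOn_const.div hf_cont.continuousOn (fun u hu => (hfpos u hu).ne')
  have hI : IntervalIntegrable (fun u => 1 / f u) volume y 1 := by
    apply ContinuousOn.intervalIntegrable
    apply hc.mono
    intro u hu
    have := hu.1
    exact lt_of_lt_of_le (lt_min hy one_pos) this
  have := intervalIntegral.integral_hasDerivAt_left hI
    (hc.stronglyMeasurableAtFilter isOpen_Ioi y hy) (hc.continuousAt (Ioi_mem_nhds hy))
  apply this.congr_of_eventuallyEq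
  filter_upwards [Ioi_mem_nhds hy] with v hv
  exact hF v hv

lemma aux_Finv_deriv (f F Finv : ℝ → ℝ) (hfpos : ∀ y, 0 < y → 0 < f y)
    (hFd : ∀ y, 0 < y → HasDerivAt F (-(1 / f y)) y) (hF1 : F 1 = 0)
    (hF_anti : StrictAntiOn F (Set.Ioi 0))
    (hFinv : ∀ t : ℝ, 0 ≤ t → 0 < Finv t ∧ F (Finv t) = t) (t : ℝ) (ht : 0 < t) :
    HasDerivAt Finv (-f (Finv t)) t := by
  have hlt : ∀ s, 0 < s → 0 < Finv s ∧ Finv s < 1 := by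
    intro s hs
    obtain ⟨h1, h2⟩ := hFinv s hs.le
    refine ⟨h1, ?_⟩
    rw [← hF_anti.lt_iff_gt (mem_Ioi.2 one_pos) h1, h2, hF1]; exact hs
  have hmono : StrictMonoOn (fun s => -Finv s) (Ioi 0) := by
    intro a ha b hb hab
    have h1 := hFinv a (le_of_lt ha)
    have h2 := hFinv b (le_of_lt hb)
    simp only [neg_lt_neg_iff]
    rw [← hF_anti.lt_iff_gt h1.1 h2.1, h1.2, h2.2]; exact hab
  have himg : Ioo (-1) 0 ⊆ (fun s => -Finv s) '' Ioi 0 := by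
    intro v hv
    have hv0 : 0 < -v := by linarith [hv.2]
    have hpos : 0 < F (-v) := by
      rw [← hF1]; exact hF_anti hv0 (mem_Ioi.2 one_pos) (by linarith [hv.1])
    refine ⟨F (-v), hpos, ?_⟩
    have h1 := hFinv _ hpos.le
    have := hF_anti.injOn h1.1 hv0 h1.2
    simp [this]
  have hcont : ContinuousAt Finv t := by
    have := hmono.continuousAt_of_image_mem_nhds (Ioi_mem_nhds ht)
      (mem_of_superset (Ioo_mem_nhds (by linarith [(hlt t ht).2]) (by linarith [(hlt t ht).1])) himg)
    have h2 := this.neg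
    have h3 : (-fun s => -Finv s) = Finv := by ext s; simp
    first
      | exact (h3 ▸ h2)
      | (simp only [neg_neg] at h2; exact h2)
      | exact h2.congr (Eventually.of_forall fun s => by simp)
  have hp := hfpos _ (hlt t ht).1
  have := HasDerivAt.of_local_left_inverse hcont (hFd _ (hlt t ht).1)
    (by simpa using hp.ne')
    (by filter_upwards [Ioi_mem_nhds ht] with s hs; exact (hFinv s (le_of_lt hs)).2)
  refine HasDerivAt.congr_deriv this ?_
  simp

lemma aux_pos (f g x : ℝ → ℝ) (ξ : ℝ) (hf_zero : f 0 = 0)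
    (hg_pos : ∀ t : ℝ, 0 < t → 0 < g t) (hξ : 0 < ξ) (hx : IsSol f g ξ x) :
    ∀ t, 0 < t → 0 < x t := by
  obtain ⟨hc, h0, hd⟩ := hx
  have hnn : ∀ t, 0 < t → 0 ≤ x t := by
    intro t ht
    have e1 : ∀ᶠ s in 𝓝[>] (0:ℝ), 0 < x s := by
      have : Tendsto x (𝓝[>] 0) (𝓝 ξ) := by
        rw [← h0]
        exact ((hc 0 self_mem_Ici).mono Ioi_subset_Ici_self)
      exact this.eventually (lt_mem_nhds hξ)
    obtain ⟨a, ha, ha2⟩ := (e1.and (Ioo_mem_nhdsGT ht)).exists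
    have := image_le_of_deriv_right_lt_deriv_boundary' (f := fun s => - x s)
        (f' := fun s => -(-f (x s) + g s)) (a := a) (b := t)
        (B := fun _ => 0) (B' := fun _ => 0)
        (fun s hs => (hd s (by linarith [hs.1, ha2.1])).continuousAt.continuousWithinAt.neg)
        (fun s hs => (hd s (by linarith [hs.1, ha2.1])).neg.hasDerivWithinAt)
        (by simpa using ha.le) (by fun_prop)
        (fun s hs => (hasDerivAt_const s (0:ℝ)).hasDerivWithinAt)
        (fun s hs h => by
          have h' : x s = 0 := by simpa using h
          have := hg_pos s (by linarith [hs.1, ha2.1])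
          simp only [h', hf_zero]; linarith)
    have := this (x := t) ⟨ha2.2.le, le_rfl⟩
    simpa using this
  intro t ht
  rcases (hnn t ht).lt_or_eq with h | h
  · exact h
  · have hm : IsLocalMin x t := by
      filter_upwards [Ioi_mem_nhds ht] with s hs
      rw [← h]; exact hnn s hs
    have := hm.hasDerivAt_eq_zero (hd t ht)
    rw [← h, hf_zero] at this
    have := hg_pos t ht
    linarith

/-- Theorem 2.3(ii) (Theorem `FxtLambda`, part (ii)): under the base hypotheses and
Condition (M), if `f∘F⁻¹ ∈ RV_∞(-1)`, `F⁻¹ ∈ RV_∞(0)` and `g(t)/(f∘F⁻¹)(t) → L > 0`,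
then the solution of `x' = -f(x) + g`, `x(0) = ξ > 0`, obeys `x(t) → 0` and
`F(x(t))/t → 1/(L+1)`. -/
theorem stmt_3
    (f g F Finv : ℝ → ℝ) (ξ : ℝ) (x : ℝ → ℝ)
    (hf_cont : Continuous f) (hf_lip : LocallyLipschitz f)
    (hf_sign : ∀ y : ℝ, y ≠ 0 → 0 < y * f y) (hf_zero : f 0 = 0)
    (hg_cont : ContinuousOn g (Set.Ici 0)) (hg_pos : ∀ t : ℝ, 0 < t → 0 < g t)
    (hF : ∀ y : ℝ, 0 < y → F y = ∫ u in y..(1:ℝ), 1 / f u)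
    (hF_top : Tendsto F (nhdsWithin 0 (Set.Ioi 0)) atTop)
    (hF_anti : StrictAntiOn F (Set.Ioi 0))
    (hFinv : ∀ t : ℝ, 0 ≤ t → 0 < Finv t ∧ F (Finv t) = t)
    (hFinv_to0 : Tendsto Finv atTop (nhds 0))
    (hξ : 0 < ξ) (hx : IsSol f g ξ x)
    (hM : ∃ δ : ℝ, 0 < δ ∧ ∃ φ : ℝ → ℝ, StrictMonoOn φ (Set.Ioo 0 δ) ∧
      Tendsto (fun y => f y / φ y) (nhdsWithin 0 (Set.Ioi 0)) (nhds 1))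
    (hfFinvRV : RVatInf (fun t => f (Finv t)) (-1))
    (hFinvRV : RVatInf Finv 0)
    (L : ℝ) (hLpos : 0 < L)
    (hL : Tendsto (fun t => g t / f (Finv t)) atTop (nhds L)) :
    Tendsto x atTop (nhds 0) ∧
    Tendsto (fun t => F (x t) / t) atTop (nhds (1 / (L + 1))) := by
  have hfpos : ∀ y, 0 < y → 0 < f y := fun y hy => (mul_pos_iff_of_pos_left hy).1 (hf_sign y hy.ne')
  have hxpos := aux_pos f g x ξ hf_zero hg_pos hξ hx
  have hFd := aux_Fderiv f F hf_cont hfpos hF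
  have hF1 : F 1 = 0 := by rw [hF 1 one_pos]; simp
  have hFinvd := aux_Finv_deriv f F Finv hfpos hFd hF1 hF_anti hFinv
  have hxd := hx.2.2
  have hhpos : ∀ t, 0 < t → 0 < f (Finv t) := fun t ht => hfpos _ (hFinv t ht.le).1
  -- Step 1: `x → 0`
  have hx0 : Tendsto x atTop (nhds 0) := by
    obtain ⟨T, hT⟩ := eventually_atTop.1 (hL.eventually (gt_mem_nhds (show L < L + 1 by linarith)))
    set T' := max T 1 with hT'
    have hwd : ∀ t, 0 < t → HasDerivAt (fun s => x s + (L+1) * Finv s)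
        (-f (x t) + g t + (L+1) * (-f (Finv t))) t :=
      fun t ht => (hxd t ht).add ((hFinvd t ht).const_mul (L+1))
    have hT0 : ∀ t, T' ≤ t → 0 < t := fun t ht => by
      have : (1:ℝ) ≤ T' := le_max_right _ _
      linarith
    have hwle : ∀ t, T' ≤ t → -f (x t) + g t + (L+1) * (-f (Finv t)) ≤ - f (x t) := by
      intro t ht
      have h1 := hT t (le_trans (le_max_left _ _) ht)
      rw [div_lt_iff₀ (hhpos t (hT0 t ht))] at h1
      linarith
    have hanti : AntitoneOn (fun s => x s + (L+1) * Finv s) (Ici T') := by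
      apply antitoneOn_of_hasDerivWithinAt_nonpos (convex_Ici T')
        (f' := fun t => -f (x t) + g t + (L+1) * (-f (Finv t)))
      · intro s hs; exact (hwd s (hT0 s hs)).continuousAt.continuousWithinAt
      · intro s hs
        rw [interior_Ici] at hs
        exact (hwd s (hT0 s (le_of_lt hs))).hasDerivWithinAt
      · intro s hs
        rw [interior_Ici] at hs
        have := hwle s (le_of_lt hs)
        have := hfpos _ (hxpos s (hT0 s (le_of_lt hs)))
        linarith
    have hwpos : ∀ t, 0 < t → 0 < x t + (L+1) * Finv t := by
      intro t ht
      have := hxpos t ht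
      have := (hFinv t ht.le).1
      positivity
    have hlim : ∃ c, 0 ≤ c ∧ Tendsto (fun s => x s + (L+1) * Finv s) atTop (𝓝 c) := by
      set W : ℝ → ℝ := fun s => x (max s T') + (L+1) * Finv (max s T') with hW
      have hWa : Antitone W := by
        intro a b hab
        exact hanti (mem_Ici.2 (le_max_right _ _)) (mem_Ici.2 (le_max_right _ _)) (max_le_max_right _ hab)
      have hWb : BddBelow (range W) := ⟨0, by
        rintro _ ⟨s, rfl⟩
        exact (hwpos _ (hT0 _ (le_max_right _ _))).le⟩
      have h := tendsto_atTop_ciInf hWa hWb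
      refine ⟨_, ?_, h.congr' ?_⟩
      · exact le_ciInf (fun s => (hwpos _ (hT0 _ (le_max_right _ _))).le)
      · filter_upwards [eventually_ge_atTop T'] with s hs
        simp [hW, max_eq_left hs]
    obtain ⟨c, hc0, hc⟩ := hlim
    have hxc : Tendsto x atTop (𝓝 c) := by
      have := hc.sub (hFinv_to0.const_mul (L+1))
      simpa using this
    rcases hc0.eq_or_lt with h | h
    · rwa [← h] at hxc
    · exfalso
      have hfc := hfpos c h
      have h1 := ((hf_cont.tendsto c).comp hxc).eventually (lt_mem_nhds (half_lt_self hfc))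
      obtain ⟨S, hS⟩ := eventually_atTop.1 h1
      have h2 := aux_barrier _ _ (f c / 2) (max S T') (by positivity)
        (fun t ht => hwd t (hT0 t (le_trans (le_max_right _ _) ht.le)))
        (fun t ht _ => by
          have h3 := hwle t (le_trans (le_max_right _ _) ht.le)
          have h4 := hS t (le_trans (le_max_left _ _) ht.le)
          simp only [Function.comp] at h4
          linarith)
      obtain ⟨t, ht1, ht2⟩ := (h2.and (eventually_gt_atTop 0)).exists
      exact absurd (hwpos t ht2) (not_lt.2 ht1)
  refine ⟨hx0, ?_⟩
  have hyd : ∀ t, 0 < t → HasDerivAt (fun s => F (x s)) (1 - g t / f (x t)) t := by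
    intro t ht
    have := (hFd (x t) (hxpos t ht)).comp t (hxd t ht)
    have hp := hfpos _ (hxpos t ht)
    refine HasDerivAt.congr_deriv this ?_
    field_simp
    ring
  have hgμ : ∀ μ, 0 < μ → Tendsto (fun t => g t / f (Finv (μ * t))) atTop (𝓝 (L * μ)) := by
    intro μ hμ
    have h1 := hfFinvRV μ hμ
    rw [Real.rpow_neg_one] at h1
    have h2 := hL.div h1 (by positivity)
    rw [div_inv_eq_mul] at h2
    apply h2.congr'
    filter_upwards [eventually_gt_atTop 0] with t ht
    have := (hhpos t ht).ne'
    have := (hhpos (μ * t) (by positivity)).ne'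
    simp only [Pi.div_apply]
    field_simp
  have hFinvμ : ∀ μ, 0 < μ → Tendsto (fun t => Finv (μ * t)) atTop (𝓝 0) := fun μ hμ =>
    hFinv_to0.comp (tendsto_id.const_mul_atTop hμ)
  -- upper bound
  have hup : ∀ μ, 1 / (L+1) < μ → ∀ᶠ t in atTop, F (x t) ≤ μ * t := by
    intro μ hμ
    have hμ0 : 0 < μ := lt_trans (by positivity) hμ
    rw [div_lt_iff₀ (by linarith)] at hμ
    have hη : ∃ η, 0 < η ∧ (1 - μ) * (1 + η) < L * μ := by
      have h1 : Tendsto (fun η : ℝ => (1 - μ) * (1 + η)) (𝓝[>] 0) (𝓝 ((1 - μ) * (1 + 0))) :=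
        (Continuous.tendsto (by fun_prop) 0).mono_left nhdsWithin_le_nhds
      obtain ⟨η, h, h'⟩ := ((h1.eventually (gt_mem_nhds (show (1 - μ) * (1 + 0) < L * μ by linarith))).and
        self_mem_nhdsWithin).exists
      exact ⟨η, h', h⟩
    obtain ⟨η, hη, hη2⟩ := hη
    obtain ⟨d, hd, hmono⟩ := aux_mono f hfpos hM η hη
    have hp : 1 - μ < L * μ / (1 + η) := by rwa [lt_div_iff₀ (by linarith)]
    obtain ⟨q, hq1, hq2⟩ := exists_between hp
    have e1 := ((hgμ μ hμ0).div_const (1 + η)).eventually (lt_mem_nhds hq2)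
    have e2 := (hFinvμ μ hμ0).eventually (gt_mem_nhds hd)
    obtain ⟨T, hT⟩ := eventually_atTop.1 (e1.and (e2.and (eventually_gt_atTop 0)))
    have := aux_barrier (fun t => F (x t) - μ * t) (fun t => 1 - g t / f (x t) - μ)
      (q - (1 - μ)) T (by linarith)
      (fun t ht => by
        have := (hyd t (hT t ht.le).2.2).sub ((hasDerivAt_id t).const_mul μ)
        exact HasDerivAt.congr_deriv this (by simp))
      (fun t ht hz => by
        obtain ⟨h1, h2, h3⟩ := hT t ht.le
        have h4 := hFinv (μ * t) (by positivity)
        have h5 : x t ≤ Finv (μ * t) := by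
          rw [← hF_anti.le_iff_ge h4.1 (hxpos t h3), h4.2]; linarith
        have h6 := hmono _ _ (hxpos t h3) h5 h2
        have h7 : g t / ((1 + η) * f (Finv (μ * t))) ≤ g t / f (x t) :=
          div_le_div_of_nonneg_left (hg_pos t h3).le (hfpos _ (hxpos t h3)) h6
        have h8 : g t / f (Finv (μ * t)) / (1 + η) = g t / ((1 + η) * f (Finv (μ * t))) := by
          rw [div_div, mul_comm]
        linarith)
    filter_upwards [this] with t ht
    linarith
  -- lower bound
  have hlow : ∀ μ, 0 < μ → μ < 1 / (L+1) → ∀ᶠ t in atTop, μ * t ≤ F (x t) := by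
    intro μ hμ0 hμ
    rw [lt_div_iff₀ (by linarith)] at hμ
    have hη : ∃ η, 0 < η ∧ (L * μ) * (1 + η) < 1 - μ := by
      have h1 : Tendsto (fun η : ℝ => (L * μ) * (1 + η)) (𝓝[>] 0) (𝓝 ((L * μ) * (1 + 0))) :=
        (Continuous.tendsto (by fun_prop) 0).mono_left nhdsWithin_le_nhds
      obtain ⟨η, h, h'⟩ := ((h1.eventually (gt_mem_nhds (show (L * μ) * (1 + 0) < 1 - μ by linarith))).and
        self_mem_nhdsWithin).exists
      exact ⟨η, h', h⟩
    obtain ⟨η, hη, hη2⟩ := hη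
    obtain ⟨d, hd, hmono⟩ := aux_mono f hfpos hM η hη
    obtain ⟨q, hq1, hq2⟩ := exists_between hη2
    have e1 := ((hgμ μ hμ0).mul_const (1 + η)).eventually (gt_mem_nhds hq1)
    have e2 := hx0.eventually (gt_mem_nhds hd)
    obtain ⟨T, hT⟩ := eventually_atTop.1 (e1.and (e2.and (eventually_gt_atTop 0)))
    have := aux_barrier (fun t => μ * t - F (x t)) (fun t => μ - (1 - g t / f (x t)))
      (1 - μ - q) T (by linarith)
      (fun t ht => by
        have := ((hasDerivAt_id t).const_mul μ).sub (hyd t (hT t ht.le).2.2)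
        exact HasDerivAt.congr_deriv this (by simp))
      (fun t ht hz => by
        obtain ⟨h1, h2, h3⟩ := hT t ht.le
        have h4 := hFinv (μ * t) (by positivity)
        have h5 : Finv (μ * t) ≤ x t := by
          rw [← hF_anti.le_iff_ge (hxpos t h3) h4.1, h4.2]; linarith
        have h6 := hmono _ _ h4.1 h5 h2
        have hfx := hfpos _ (hxpos t h3)
        have hfi := hfpos _ h4.1
        have hg := hg_pos t h3
        have h7 : g t / f (x t) ≤ g t / f (Finv (μ * t)) * (1 + η) := by
          rw [div_mul_eq_mul_div, div_le_div_iff₀ hfx hfi]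
          calc g t * f (Finv (μ * t)) ≤ g t * ((1 + η) * f (x t)) := by gcongr
            _ = _ := by ring
        linarith)
    filter_upwards [this] with t ht
    linarith
  rw [tendsto_order]
  constructor
  · intro a ha
    obtain ⟨μ, h1, h2⟩ := exists_between (max_lt ha (show 0 < 1 / (L+1) by positivity))
    filter_upwards [hlow μ (lt_of_le_of_lt (le_max_right _ _) h1) h2, eventually_gt_atTop 0]
      with t ht ht0
    exact lt_of_lt_of_le (lt_of_le_of_lt (le_max_left _ _) h1) ((le_div_iff₀ ht0).2 ht)
  · intro a ha
    obtain ⟨μ, h1, h2⟩ := exists_between ha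
    filter_upwards [hup μ h1, eventually_gt_atTop 0] with t ht ht0
    exact lt_of_le_of_lt ((div_le_iff₀ ht0).2 ht) h2
end
end

section
/- Assume the base hypotheses and Condition (M). Suppose that either f ∈ RV₀(β) for some β > 1 or f∘F⁻¹ ∈ RV_∞(-1), that the unique continuous solution x of x'(t) = -f(x(t)) + g(t), x(0) = ξ > 0, satisfies x(t) → 0 as t → ∞, and that lim_{t→∞} g(t)/(f∘F⁻¹)(t) = L ∈ [0,∞]. Then: (i) if L = 0, lim_{t→∞} F(x(t))/t = 1; (ii) if L ∈ (0,∞), lim_{t→∞} F(x(t))/t = Λ* ∈ (0,1), where Λ* is the unique solution of (1 - Λ*)·Λ*^{-β/(β-1)} = L when f ∈ RV₀(β) with β > 1, and Λ* = 1/(1+L) when f∘F⁻¹ ∈ RV_∞(-1); (iii) if L = ∞, lim_{t→∞} F(x(t))/t = 0. -/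
open Filter Real Set Topology MeasureTheory

noncomputable section

/-- Barrier lemma: if `v` decreases at a fixed rate whenever it is nonnegative, it is eventually
nonpositive. -/
lemma barrier (v v' : ℝ → ℝ) (T η : ℝ) (hη : 0 < η)
    (hv : ∀ t, T ≤ t → HasDerivAt v (v' t) t)
    (hneg : ∀ t, T ≤ t → 0 ≤ v t → v' t ≤ -η) : ∀ᶠ t in atTop, v t ≤ 0 := by
  have h1 : ∃ T1, T ≤ T1 ∧ v T1 ≤ 0 := by
    by_contra! hcon
    have hanti : AntitoneOn (fun t => v t + η * t) (Ici T) := by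
      apply antitoneOn_of_hasDerivWithinAt_nonpos (f' := fun t => v' t + η * 1) (convex_Ici T)
      · intro t ht
        exact ((hv t ht).continuousAt.add (by fun_prop)).continuousWithinAt
      · intro t ht
        rw [interior_Ici] at ht
        exact ((hv t (le_of_lt ht)).add ((hasDerivAt_id t).const_mul η)).hasDerivWithinAt
      · intro t ht
        rw [interior_Ici] at ht
        have := hneg t (le_of_lt ht) (hcon t (le_of_lt ht)).le
        linarith
    have hT := hcon T le_rfl
    have h2 := hanti (a := T) (b := T + v T / η) (by simp)
      (by simp only [mem_Ici]; have := div_pos hT hη; linarith)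
      (by have := div_pos hT hη; linarith)
    have h3 := hcon (T + v T / η) (by have := div_pos hT hη; linarith)
    have h4 : η * (v T / η) = v T := by field_simp
    simp only at h2
    nlinarith
  obtain ⟨T1, hT1, hvT1⟩ := h1
  filter_upwards [eventually_ge_atTop T1] with t ht
  have := image_le_of_deriv_right_lt_deriv_boundary (f := v) (f' := v') (a := T1) (b := t)
    (B := fun _ => 0) (B' := fun _ => 0)
    (fun s hs => (hv s (hT1.trans hs.1)).continuousAt.continuousWithinAt)
    (fun s hs => (hv s (hT1.trans hs.1)).hasDerivWithinAt) hvT1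
    (fun s => hasDerivAt_const s 0)
    (fun s hs h0 => by
      have := hneg s (hT1.trans hs.1) h0.ge
      linarith)
  exact this (right_mem_Icc.2 ht)

/-- Upper comparison. -/
lemma upper_cmp (u g h : ℝ → ℝ) (c m : ℝ) (hc : 0 < c) (hm : 0 ≤ m) (hmc : 1 - m < c)
    (hu : ∀ᶠ t in atTop, HasDerivAt u (1 - g t / h (u t)) t)
    (hut : Tendsto u atTop atTop)
    (hh : ∀ᶠ t in atTop, 0 < h t)
    (hqm : ∀ ε > 0, ∃ R, ∀ r s, R ≤ r → r ≤ s → h s ≤ (1 + ε) * h r)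
    (hg : ∀ᶠ t in atTop, m ≤ g t / h (c * t)) : ∀ᶠ t in atTop, u t ≤ c * t := by
  obtain ⟨ε, hε, hεm⟩ : ∃ ε > 0, 1 - m / (1 + ε) < c := by
    have : Tendsto (fun ε : ℝ => 1 - m / (1 + ε)) (𝓝[>] 0) (𝓝 (1 - m / (1 + 0))) := by
      apply tendsto_nhdsWithin_of_tendsto_nhds
      apply ContinuousAt.tendsto (f := fun ε : ℝ => 1 - m / (1 + ε))
      fun_prop (disch := norm_num)
    have h2 := (this.eventually_lt_const (u := c) (by simpa using hmc)).and self_mem_nhdsWithin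
    obtain ⟨ε, h3, h4⟩ := h2.exists
    exact ⟨ε, h4, h3⟩
  obtain ⟨R, hR⟩ := hqm ε hε
  have hct : Tendsto (fun t : ℝ => c * t) atTop atTop := tendsto_id.const_mul_atTop hc
  obtain ⟨T, hT⟩ := eventually_atTop.1 (hu.and ((hut.eventually hh).and
    ((hct.eventually hh).and (hg.and (hct.eventually_ge_atTop R)))))
  have := barrier (fun t => u t - c * t) (fun t => (1 - g t / h (u t)) - c * 1) T
    (c - (1 - m / (1 + ε))) (by linarith)
    (fun t ht => (hT t ht).1.sub ((hasDerivAt_id t).const_mul c))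
    (fun t ht h0 => by
      obtain ⟨-, h1, h2, h3, h4⟩ := hT t ht
      have h5 := hR (c * t) (u t) h4 (by simpa using h0)
      have h6 : m * h (c * t) ≤ g t := (le_div_iff₀ h2).1 h3
      have h7 : m / (1 + ε) ≤ g t / h (u t) := by
        rw [div_le_div_iff₀ (by linarith) h1]
        nlinarith
      linarith)
  filter_upwards [this] with t ht
  linarith

/-- Lower comparison. -/
lemma lower_cmp (u g h : ℝ → ℝ) (c m : ℝ) (hc : 0 < c) (hm : 0 ≤ m) (hmc : c < 1 - m)
    (hu : ∀ᶠ t in atTop, HasDerivAt u (1 - g t / h (u t)) t)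
    (hut : Tendsto u atTop atTop)
    (hh : ∀ᶠ t in atTop, 0 < h t)
    (hqm : ∀ ε > 0, ∃ R, ∀ r s, R ≤ r → r ≤ s → h s ≤ (1 + ε) * h r)
    (hg : ∀ᶠ t in atTop, g t / h (c * t) ≤ m) : ∀ᶠ t in atTop, c * t ≤ u t := by
  obtain ⟨ε, hε, hεm⟩ : ∃ ε > 0, c < 1 - m * (1 + ε) := by
    have : Tendsto (fun ε : ℝ => 1 - m * (1 + ε)) (𝓝[>] 0) (𝓝 (1 - m * (1 + 0))) := by
      apply tendsto_nhdsWithin_of_tendsto_nhds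
      apply ContinuousAt.tendsto (f := fun ε : ℝ => 1 - m * (1 + ε))
      fun_prop
    have h2 := (this.eventually_const_lt (u := c) (by simpa using hmc)).and self_mem_nhdsWithin
    obtain ⟨ε, h3, h4⟩ := h2.exists
    exact ⟨ε, h4, h3⟩
  obtain ⟨R, hR⟩ := hqm ε hε
  have hct : Tendsto (fun t : ℝ => c * t) atTop atTop := tendsto_id.const_mul_atTop hc
  obtain ⟨T, hT⟩ := eventually_atTop.1 (hu.and ((hut.eventually hh).and
    ((hct.eventually hh).and (hg.and (hut.eventually_ge_atTop R)))))
  have := barrier (fun t => c * t - u t) (fun t => c * 1 - (1 - g t / h (u t))) T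
    ((1 - m * (1 + ε)) - c) (by linarith)
    (fun t ht => ((hasDerivAt_id t).const_mul c).sub (hT t ht).1)
    (fun t ht h0 => by
      obtain ⟨-, h1, h2, h3, h4⟩ := hT t ht
      have h5 := hR (u t) (c * t) h4 (by simpa using h0)
      have h6 : g t ≤ m * h (c * t) := (div_le_iff₀ h2).1 h3
      have h7 : g t / h (u t) ≤ m * (1 + ε) := by
        rw [div_le_iff₀ h1]
        nlinarith
      linarith)
  filter_upwards [this] with t ht
  linarith

/-- Convergence of `u t / t` for finite `L`. -/
lemma conv_finite (u g h : ℝ → ℝ) (γ L Λ : ℝ) (hγ : 0 < γ) (hL : 0 ≤ L) (hΛ : 0 < Λ)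
    (hΛL : 1 - L * Λ ^ γ = Λ)
    (hu : ∀ᶠ t in atTop, HasDerivAt u (1 - g t / h (u t)) t)
    (hut : Tendsto u atTop atTop)
    (hh : ∀ᶠ t in atTop, 0 < h t)
    (hqm : ∀ ε > 0, ∃ R, ∀ r s, R ≤ r → r ≤ s → h s ≤ (1 + ε) * h r)
    (hgpos : ∀ᶠ t in atTop, 0 < g t)
    (hrv : RVatInf h (-γ))
    (hg : Tendsto (fun t => g t / h t) atTop (𝓝 L)) :
    Tendsto (fun t => u t / t) atTop (𝓝 Λ) := by
  have key : ∀ c > 0, Tendsto (fun t => g t / h (c * t)) atTop (𝓝 (L * c ^ γ)) := by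
    intro c hc
    have h1 := hg.div (hrv c hc) (by positivity)
    have h2 : L / c ^ (-γ) = L * c ^ γ := by rw [rpow_neg hc.le]; field_simp
    rw [h2] at h1
    refine h1.congr' ?_
    have hct : Tendsto (fun t : ℝ => c * t) atTop atTop := tendsto_id.const_mul_atTop hc
    filter_upwards [hh, hct.eventually hh] with t h3 h4
    simp only [Pi.div_apply]
    field_simp
  have hup : ∀ c > Λ, ∀ᶠ t in atTop, u t ≤ c * t := by
    intro c hc
    have hc0 : 0 < c := hΛ.trans hc
    have h1 : Λ ^ γ ≤ c ^ γ := rpow_le_rpow hΛ.le hc.le hγ.le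
    have h2 : 1 - c < L * c ^ γ := by nlinarith
    obtain ⟨m, hm1, hm2⟩ := exists_between h2
    refine upper_cmp u g h c (max 0 m) hc0 (le_max_left _ _)
      (by have := le_max_right 0 m; linarith) hu hut hh hqm ?_
    have hct : Tendsto (fun t : ℝ => c * t) atTop atTop := tendsto_id.const_mul_atTop hc0
    filter_upwards [(key c hc0).eventually_const_lt hm2, hct.eventually hh, hgpos] with t a b d
    exact max_le (by positivity) a.le
  have hlow : ∀ c, 0 < c → c < Λ → ∀ᶠ t in atTop, c * t ≤ u t := by
    intro c hc0 hc
    have h1 : c ^ γ ≤ Λ ^ γ := rpow_le_rpow hc0.le hc.le hγ.le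
    have h2 : L * c ^ γ < 1 - c := by nlinarith
    obtain ⟨m, hm1, hm2⟩ := exists_between h2
    have h3 : 0 ≤ L * c ^ γ := by positivity
    refine lower_cmp u g h c m hc0 (by linarith) (by linarith) hu hut hh hqm ?_
    filter_upwards [(key c hc0).eventually_lt_const hm1] with t a
    exact a.le
  rw [tendsto_order]
  constructor
  · intro a ha
    obtain ⟨c, hc1, hc2⟩ := exists_between (max_lt ha hΛ)
    filter_upwards [hlow c ((le_max_right _ _).trans_lt hc1) hc2, eventually_gt_atTop 0]
      with t h1 h2
    rw [lt_div_iff₀ h2]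
    have := (le_max_left a 0).trans_lt hc1
    nlinarith
  · intro a ha
    obtain ⟨c, hc1, hc2⟩ := exists_between ha
    filter_upwards [hup c hc1, eventually_gt_atTop 0] with t h1 h2
    rw [div_lt_iff₀ h2]
    nlinarith

/-- Convergence of `u t / t` for `L = ∞`. -/
lemma conv_inf (u g h : ℝ → ℝ) (γ : ℝ)
    (hu : ∀ᶠ t in atTop, HasDerivAt u (1 - g t / h (u t)) t)
    (hut : Tendsto u atTop atTop)
    (hh : ∀ᶠ t in atTop, 0 < h t)
    (hqm : ∀ ε > 0, ∃ R, ∀ r s, R ≤ r → r ≤ s → h s ≤ (1 + ε) * h r)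
    (hrv : RVatInf h (-γ))
    (hg : Tendsto (fun t => g t / h t) atTop atTop) :
    Tendsto (fun t => u t / t) atTop (𝓝 0) := by
  have key : ∀ c > 0, Tendsto (fun t => g t / h (c * t)) atTop atTop := by
    intro c hc
    have h0 : (0:ℝ) < c ^ (-γ) := by positivity
    have h1 := hg.atTop_mul_pos (inv_pos.2 h0) ((hrv c hc).inv₀ h0.ne')
    refine h1.congr' ?_
    have hct : Tendsto (fun t : ℝ => c * t) atTop atTop := tendsto_id.const_mul_atTop hc
    filter_upwards [hh, hct.eventually hh] with t h3 h4
    field_simp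
  rw [tendsto_order]
  constructor
  · intro a ha
    filter_upwards [hut.eventually_gt_atTop 0, eventually_gt_atTop 0] with t h1 h2
    exact ha.trans (div_pos h1 h2)
  · intro a ha
    filter_upwards [upper_cmp u g h (a / 2) 1 (by linarith) (by norm_num) (by linarith)
      hu hut hh hqm ((key (a / 2) (by linarith)).eventually_ge_atTop 1), eventually_gt_atTop 0]
      with t h1 h2
    rw [div_lt_iff₀ h2]
    nlinarith

/-- Quasi-monotonicity of `f` near `0`. -/
lemma quasi_mono (f : ℝ → ℝ) (hfpos : ∀ y, 0 < y → 0 < f y)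
    (hM : ∃ δ : ℝ, 0 < δ ∧ ∃ φ : ℝ → ℝ, StrictMonoOn φ (Set.Ioo 0 δ) ∧
      Tendsto (fun y => f y / φ y) (nhdsWithin 0 (Set.Ioi 0)) (nhds 1)) :
    ∀ ε > 0, ∃ d > 0, ∀ y z, 0 < y → y ≤ z → z < d → f y ≤ (1 + ε) * f z := by
  obtain ⟨δ, hδ, φ, hφ, hlim⟩ := hM
  intro ε hε
  obtain ⟨b, hb0, hb1, hb2⟩ : ∃ b : ℝ, 0 < b ∧ b < 1 ∧ 1 < (1 + ε) * b ^ 2 := by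
    have : Tendsto (fun b : ℝ => (1 + ε) * b ^ 2) (𝓝[<] 1) (𝓝 ((1 + ε) * 1 ^ 2)) := by
      apply tendsto_nhdsWithin_of_tendsto_nhds
      apply ContinuousAt.tendsto (f := fun b : ℝ => (1 + ε) * b ^ 2)
      fun_prop
    have h2 := (this.eventually_const_lt (u := 1) (by simpa using hε)).and
      (Ioo_mem_nhdsLT (show (0:ℝ) < 1 by norm_num))
    obtain ⟨b, h3, h4⟩ := h2.exists
    exact ⟨b, h4.1, h4.2, h3⟩
  have h1b : 1 < 1 / b := by rw [lt_div_iff₀ hb0]; linarith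
  have hev := (hlim.eventually_const_lt hb1).and (hlim.eventually_lt_const h1b)
  obtain ⟨d, hd, hsub⟩ := mem_nhdsGT_iff_exists_Ioo_subset.1 hev
  have hb : ∀ y, 0 < y → y < d → 0 < φ y ∧ b * φ y < f y ∧ b * f y < φ y := by
    intro y hy hyd
    obtain ⟨h1, h2⟩ := hsub ⟨hy, hyd⟩
    have hp : 0 < φ y := by
      by_contra hn
      have : f y / φ y ≤ 0 := div_nonpos_of_nonneg_of_nonpos (hfpos y hy).le (not_lt.1 hn)
      linarith
    refine ⟨hp, (lt_div_iff₀ hp).1 h1, ?_⟩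
    rw [div_lt_div_iff₀ hp hb0] at h2
    linarith
  refine ⟨min d δ, lt_min hd hδ, fun y z hy hyz hz => ?_⟩
  obtain ⟨hz1, hz2⟩ := lt_min_iff.1 hz
  have hz0 := hy.trans_le hyz
  obtain ⟨a1, a2, a3⟩ := hb y hy (hyz.trans_lt hz1)
  obtain ⟨b1, b2, b3⟩ := hb z hz0 hz1
  have h3 : φ y ≤ φ z := hφ.monotoneOn ⟨hy, hyz.trans_lt hz2⟩ ⟨hz0, hz2⟩ hyz
  have h4 : b ^ 2 * f y ≤ f z := by nlinarith
  have := hfpos y hy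
  have h5 : (1 + ε) * (b ^ 2 * f y) ≤ (1 + ε) * f z := by gcongr
  nlinarith

/-- Derivative of `F`. -/
lemma F_deriv (f F : ℝ → ℝ) (hf_cont : Continuous f) (hfpos : ∀ y, 0 < y → 0 < f y)
    (hF : ∀ y : ℝ, 0 < y → F y = ∫ u in y..(1:ℝ), 1 / f u) :
    ∀ y, 0 < y → HasDerivAt F (-(1 / f y)) y := by
  intro y hy
  have hc : ContinuousOn (fun u => 1 / f u) (Ioi 0) := fun u hu =>
    (continuousAt_const.div hf_cont.continuousAt (hfpos u hu).ne').continuousWithinAt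
  have hsub : uIcc y 1 ⊆ Ioi 0 := by
    intro z hz
    exact (lt_min hy one_pos).trans_le hz.1
  have := intervalIntegral.integral_hasDerivAt_left (f := fun u => 1 / f u) (a := y) (b := 1)
    ((hc.mono hsub).intervalIntegrable)
    (hc.stronglyMeasurableAtFilter isOpen_Ioi y hy)
    (hc.continuousAt (Ioi_mem_nhds hy))
  refine this.congr_of_eventuallyEq ?_
  filter_upwards [Ioi_mem_nhds hy] with z hz
  exact hF z hz

/-- One-sided Karamata estimate. -/
lemma karamata_upper (f F : ℝ → ℝ) (β : ℝ) (hfpos : ∀ y, 0 < y → 0 < f y)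
    (hF' : ∀ y, 0 < y → HasDerivAt F (-(1 / f y)) y)
    (hF_top : Tendsto F (𝓝[>] 0) atTop) (hrv : RVat0 f β)
    (μ c : ℝ) (hμ : 0 < μ) (hc : μ ^ (1 - β) < c) :
    ∀ᶠ y in 𝓝[>] 0, F (μ * y) < c * F y := by
  obtain ⟨c', h1, h2⟩ := exists_between hc
  have hlim : Tendsto (fun y => μ * (f (μ * y) / f y)⁻¹) (𝓝[>] 0) (𝓝 (μ * (μ ^ β)⁻¹)) :=
    ((hrv μ hμ).inv₀ (by positivity)).const_mul μ
  have he : μ * (μ ^ β)⁻¹ = μ ^ (1 - β) := by rw [rpow_sub hμ, rpow_one]; rfl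
  rw [he] at hlim
  obtain ⟨d, hd, hsub⟩ := mem_nhdsGT_iff_exists_Ioo_subset.1 (hlim.eventually_lt_const h1)
  have hd : 0 < d := hd
  have hder : ∀ y, 0 < y → HasDerivAt (fun y => F (μ * y) - c' * F y)
      (-(1 / f (μ * y)) * (μ * 1) - c' * (-(1 / f y))) y := by
    intro y hy
    exact (HasDerivAt.comp y (hF' (μ * y) (by positivity))
      ((hasDerivAt_id y).const_mul μ)).sub ((hF' y hy).const_mul c')
  have hmono : MonotoneOn (fun y => F (μ * y) - c' * F y) (Ioo 0 d) := by
    apply monotoneOn_of_hasDerivWithinAt_nonneg (convex_Ioo 0 d)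
      (f' := fun y => -(1 / f (μ * y)) * (μ * 1) - c' * (-(1 / f y)))
    · intro y hy
      exact (hder y hy.1).continuousAt.continuousWithinAt
    · intro y hy
      rw [interior_Ioo] at hy
      exact (hder y hy.1).hasDerivWithinAt
    · intro y hy
      rw [interior_Ioo] at hy
      have h3 : μ * (f (μ * y) / f y)⁻¹ < c' := hsub hy
      have h4 := hfpos y hy.1
      have h5 := hfpos (μ * y) (mul_pos hμ hy.1)
      have h6 : -(1 / f (μ * y)) * (μ * 1) - c' * (-(1 / f y))
          = (1 / f y) * (c' - μ * (f (μ * y) / f y)⁻¹) := by field_simp; ring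
      rw [h6]
      exact mul_nonneg (by positivity) (by linarith)
  set C := F (μ * (d / 2)) - c' * F (d / 2) with hC
  filter_upwards [Ioo_mem_nhdsGT (half_pos hd), hF_top.eventually_gt_atTop (C / (c - c'))]
    with y hy hy2
  have h7 := hmono (a := y) (b := d / 2) ⟨hy.1, by linarith [hy.2]⟩ ⟨by linarith, by linarith⟩ hy.2.le
  rw [div_lt_iff₀ (by linarith)] at hy2
  simp only [← hC] at h7
  linarith

/-- `f ∘ F⁻¹` is regularly varying. -/
lemma comp_rv (f F Finv : ℝ → ℝ) (β : ℝ) (hβ : 1 < β) (hfpos : ∀ y, 0 < y → 0 < f y)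
    (hF' : ∀ y, 0 < y → HasDerivAt F (-(1 / f y)) y)
    (hF_top : Tendsto F (𝓝[>] 0) atTop)
    (hF_anti : StrictAntiOn F (Set.Ioi 0))
    (hFinv : ∀ t : ℝ, 0 ≤ t → 0 < Finv t ∧ F (Finv t) = t)
    (hFinv0 : Tendsto Finv atTop (𝓝[>] 0))
    (hqm : ∀ ε > 0, ∃ d > 0, ∀ y z, 0 < y → y ≤ z → z < d → f y ≤ (1 + ε) * f z)
    (hrv : RVat0 f β) :
    RVatInf (fun t => f (Finv t)) (-(β / (β - 1))) := by
  intro lam hlam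
  have hβ1 : 0 < β - 1 := by linarith
  set p : ℝ := lam ^ (-(1 / (β - 1))) with hp
  have hp0 : 0 < p := by positivity
  have hpβ : lam ^ (-(β / (β - 1))) = p ^ β := by
    rw [hp, ← rpow_mul hlam.le]; congr 1; field_simp
  have hpl : p ^ (1 - β) = lam := by
    rw [hp, ← rpow_mul hlam.le]
    have : -(1 / (β - 1)) * (1 - β) = 1 := by field_simp; ring
    rw [this, rpow_one]
  rw [hpβ]
  have hlt : Tendsto (fun t : ℝ => lam * t) atTop atTop := tendsto_id.const_mul_atTop hlam
  have hup : ∀ μ > p, ∀ᶠ t in atTop, Finv (lam * t) ≤ μ * Finv t := by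
    intro μ hμ
    have hμ0 : 0 < μ := hp0.trans hμ
    have h1 : μ ^ (1 - β) < lam := by
      rw [← hpl]; exact rpow_lt_rpow_of_neg hp0 hμ (by linarith)
    filter_upwards [hFinv0.eventually (karamata_upper f F β hfpos hF' hF_top hrv μ lam hμ0 h1),
      eventually_ge_atTop 0] with t h2 h3
    obtain ⟨h4, h5⟩ := hFinv t h3
    obtain ⟨h6, h7⟩ := hFinv (lam * t) (by positivity)
    rw [h5, ← h7] at h2
    exact ((hF_anti.lt_iff_gt (mul_pos hμ0 h4) h6).1 h2).le
  have hlow : ∀ μ, 0 < μ → μ < p → ∀ᶠ t in atTop, μ * Finv t ≤ Finv (lam * t) := by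
    intro μ hμ0 hμ
    have h1 : lam < μ ^ (1 - β) := by
      rw [← hpl]; exact rpow_lt_rpow_of_neg hμ0 hμ (by linarith)
    have h1' : (μ⁻¹) ^ (1 - β) < lam⁻¹ := by
      rw [inv_rpow hμ0.le]; exact (inv_lt_inv₀ (by positivity) hlam).2 h1
    have hsc : Tendsto (fun y : ℝ => μ * y) (𝓝[>] 0) (𝓝[>] 0) := by
      apply tendsto_nhdsWithin_of_tendsto_nhds_of_eventually_within
      · apply tendsto_nhdsWithin_of_tendsto_nhds
        have : Continuous (fun y : ℝ => μ * y) := by fun_prop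
        simpa using this.tendsto 0
      · filter_upwards [self_mem_nhdsWithin] with y hy
        exact mul_pos hμ0 hy
    filter_upwards [(hsc.comp hFinv0).eventually
      (karamata_upper f F β hfpos hF' hF_top hrv μ⁻¹ lam⁻¹ (by positivity) h1'),
      eventually_ge_atTop 0] with t h2 h3
    obtain ⟨h4, h5⟩ := hFinv t h3
    obtain ⟨h6, h7⟩ := hFinv (lam * t) (by positivity)
    simp only [Function.comp] at h2
    rw [inv_mul_cancel_left₀ hμ0.ne', h5, inv_mul_eq_div, lt_div_iff₀ hlam, mul_comm, ← h7] at h2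
    exact ((hF_anti.lt_iff_gt h6 (mul_pos hμ0 h4)).1 h2).le
  have hF0 : Tendsto Finv atTop (𝓝 0) := hFinv0.mono_right nhdsWithin_le_nhds
  rw [tendsto_order]
  constructor
  · intro K hK
    obtain ⟨e, he1, he2, he3⟩ : ∃ e : ℝ, 0 < e ∧ e < p ∧ (1 + e) * K < (p - e) ^ β := by
      have t1 : Tendsto (fun e : ℝ => (p - e) ^ β - (1 + e) * K) (𝓝[>] 0)
          (𝓝 ((p - 0) ^ β - (1 + 0) * K)) := by
        apply tendsto_nhdsWithin_of_tendsto_nhds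
        apply ContinuousAt.tendsto (f := fun e : ℝ => (p - e) ^ β - (1 + e) * K)
        apply ContinuousAt.sub
        · exact ContinuousAt.rpow_const (by fun_prop) (Or.inr (by linarith))
        · fun_prop
      have h2 := (t1.eventually_const_lt (u := 0) (by simpa using hK)).and (Ioo_mem_nhdsGT hp0)
      obtain ⟨e, h3, h4⟩ := h2.exists
      exact ⟨e, h4.1, h4.2, by linarith⟩
    obtain ⟨d, hd, hqd⟩ := hqm e he1
    have hpe : 0 < p - e := by linarith
    filter_upwards [hlow (p - e) hpe (by linarith),
      (hFinv0.eventually ((hrv (p - e) hpe).eventually_const_lt he3)),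
      (hF0.comp hlt).eventually_lt_const hd, eventually_ge_atTop 0] with t h1 h2 h3 h4
    obtain ⟨h5, -⟩ := hFinv t h4
    have h6 := hqd _ _ (mul_pos hpe h5) h1 h3
    have h7 := hfpos _ h5
    rw [lt_div_iff₀ h7] at h2 ⊢
    have : (1 + e) * (K * f (Finv t)) < (1 + e) * f (Finv (lam * t)) := by linarith
    exact lt_of_mul_lt_mul_left this (by linarith)
  · intro K hK
    obtain ⟨e, he1, he3⟩ : ∃ e : ℝ, 0 < e ∧ (p + e) ^ β < K / (1 + e) := by
      have t1 : Tendsto (fun e : ℝ => (1 + e) * (p + e) ^ β) (𝓝[>] 0)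
          (𝓝 ((1 + 0) * (p + 0) ^ β)) := by
        apply tendsto_nhdsWithin_of_tendsto_nhds
        apply ContinuousAt.tendsto (f := fun e : ℝ => (1 + e) * (p + e) ^ β)
        apply ContinuousAt.mul
        · fun_prop
        · exact ContinuousAt.rpow_const (by fun_prop) (Or.inr (by linarith))
      have h2 := (t1.eventually_lt_const (u := K) (by simpa using hK)).and self_mem_nhdsWithin
      obtain ⟨e, h3, h4⟩ := h2.exists
      have h4 : 0 < e := h4
      refine ⟨e, h4, ?_⟩
      rw [lt_div_iff₀ (by linarith)]
      linarith
    obtain ⟨d, hd, hqd⟩ := hqm e he1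
    have hpe : 0 < p + e := by linarith
    have hsc : Tendsto (fun t => (p + e) * Finv t) atTop (𝓝 0) := by
      simpa using hF0.const_mul (p + e)
    filter_upwards [hup (p + e) (by linarith),
      (hFinv0.eventually ((hrv (p + e) hpe).eventually_lt_const he3)),
      hsc.eventually_lt_const hd, eventually_ge_atTop 0] with t h1 h2 h3 h4
    obtain ⟨h5, -⟩ := hFinv t h4
    obtain ⟨h8, -⟩ := hFinv (lam * t) (by positivity)
    have h6 := hqd _ _ h8 h1 h3
    have h7 := hfpos _ h5
    rw [div_lt_div_iff₀ h7 (by linarith)] at h2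
    rw [div_lt_iff₀ h7]
    linarith

/-- The solution is eventually positive. -/
lemma sol_pos (f g x : ℝ → ℝ) (ξ : ℝ) (hf_zero : f 0 = 0) (hg_pos : ∀ t : ℝ, 0 < t → 0 < g t)
    (hξ : 0 < ξ) (hx : IsSol f g ξ x) : ∀ᶠ t in atTop, 0 < x t := by
  obtain ⟨hc, h0, hd⟩ := hx
  obtain ⟨a, ha, hxa⟩ : ∃ a, 0 < a ∧ 0 < x a := by
    have h1 : Tendsto x (𝓝[>] 0) (𝓝 ξ) := by
      have := (hc 0 self_mem_Ici).tendsto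
      rw [h0] at this
      exact this.mono_left (nhdsWithin_mono _ Ioi_subset_Ici_self)
    obtain ⟨a, h2, h3⟩ := ((h1.eventually_const_lt hξ).and self_mem_nhdsWithin).exists
    exact ⟨a, h3, h2⟩
  have hnn : ∀ t, a ≤ t → 0 ≤ x t := by
    intro t ht
    have := image_le_of_deriv_right_lt_deriv_boundary (f := fun s => - x s)
      (f' := fun s => -(-f (x s) + g s)) (a := a) (b := t)
      (B := fun _ => 0) (B' := fun _ => 0)
      (fun s hs => (hd s (ha.trans_le hs.1)).neg.continuousAt.continuousWithinAt)
      (fun s hs => (hd s (ha.trans_le hs.1)).neg.hasDerivWithinAt) (by simpa using hxa.le)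
      (fun s => hasDerivAt_const s 0)
      (fun s hs h0 => by
        have h1 : x s = 0 := by simpa using h0
        have := hg_pos s (ha.trans_le hs.1)
        simp only [h1, hf_zero]
        linarith)
    simpa using this (right_mem_Icc.2 ht)
  filter_upwards [eventually_gt_atTop a] with t ht
  refine lt_of_le_of_ne (hnn t ht.le) (fun h => ?_)
  have hmin : IsLocalMin x t := by
    filter_upwards [Ioi_mem_nhds ht] with s hs
    rw [← h]; exact hnn s (le_of_lt hs)
  have h1 := hmin.hasDerivAt_eq_zero (hd t (ha.trans ht))
  have := hg_pos t (ha.trans ht)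
  rw [← h, hf_zero] at h1
  linarith

/-- Theorem 2.6 (Theorem `overallnorv`): under the base hypotheses and Condition (M),
assume either `f ∈ RV₀(β)` for some `β > 1` or `f∘F⁻¹ ∈ RV_∞(-1)`, and that the
solution `x` of `x' = -f(x) + g`, `x(0) = ξ > 0`, satisfies `x(t) → 0`.  If
`g(t)/(f∘F⁻¹)(t) → L ∈ [0,∞]` then: (i) if `L = 0`, `F(x(t))/t → 1`;
(ii) if `L ∈ (0,∞)`, `F(x(t))/t → Λ*`, where `Λ* ∈ (0,1)` is the unique root of
`(1-Λ*)Λ*^(-β/(β-1)) = L` in the regularly varying case and `Λ* = 1/(1+L)` in the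
`f∘F⁻¹ ∈ RV_∞(-1)` case; (iii) if `L = ∞`, `F(x(t))/t → 0`. -/
theorem stmt_7
    (f g F Finv : ℝ → ℝ) (ξ : ℝ) (x : ℝ → ℝ)
    (hf_cont : Continuous f) (hf_lip : LocallyLipschitz f)
    (hf_sign : ∀ y : ℝ, y ≠ 0 → 0 < y * f y) (hf_zero : f 0 = 0)
    (hg_cont : ContinuousOn g (Set.Ici 0)) (hg_pos : ∀ t : ℝ, 0 < t → 0 < g t)
    (hF : ∀ y : ℝ, 0 < y → F y = ∫ u in y..(1:ℝ), 1 / f u)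
    (hF_top : Tendsto F (nhdsWithin 0 (Set.Ioi 0)) atTop)
    (hF_anti : StrictAntiOn F (Set.Ioi 0))
    (hFinv : ∀ t : ℝ, 0 ≤ t → 0 < Finv t ∧ F (Finv t) = t)
    (hFinv_to0 : Tendsto Finv atTop (nhds 0))
    (hξ : 0 < ξ) (hx : IsSol f g ξ x)
    (hM : ∃ δ : ℝ, 0 < δ ∧ ∃ φ : ℝ → ℝ, StrictMonoOn φ (Set.Ioo 0 δ) ∧
      Tendsto (fun y => f y / φ y) (nhdsWithin 0 (Set.Ioi 0)) (nhds 1))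
    (hreg : (∃ β : ℝ, 1 < β ∧ RVat0 f β) ∨ RVatInf (fun t => f (Finv t)) (-1))
    (hx_to0 : Tendsto x atTop (nhds 0)) :
    (Tendsto (fun t => g t / f (Finv t)) atTop (nhds 0) →
      Tendsto (fun t => F (x t) / t) atTop (nhds 1)) ∧
    (∀ L : ℝ, 0 < L → Tendsto (fun t => g t / f (Finv t)) atTop (nhds L) →
      (∀ β : ℝ, 1 < β → RVat0 f β →
        ∀ Λ ∈ Set.Ioo (0:ℝ) 1, (1 - Λ) * Λ ^ (-β / (β - 1)) = L →
          Tendsto (fun t => F (x t) / t) atTop (nhds Λ)) ∧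
      (RVatInf (fun t => f (Finv t)) (-1) →
        Tendsto (fun t => F (x t) / t) atTop (nhds (1 / (1 + L))))) ∧
    (Tendsto (fun t => g t / f (Finv t)) atTop atTop →
      Tendsto (fun t => F (x t) / t) atTop (nhds 0)) := by
  have hfpos : ∀ y, 0 < y → 0 < f y := fun y hy =>
    (mul_pos_iff_of_pos_left hy).1 (hf_sign y hy.ne')
  have hF' := F_deriv f F hf_cont hfpos hF
  have hFinv0 : Tendsto Finv atTop (𝓝[>] 0) := by
    apply tendsto_nhdsWithin_of_tendsto_nhds_of_eventually_within _ hFinv_to0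
    filter_upwards [eventually_ge_atTop 0] with t ht
    exact (hFinv t ht).1
  have hqf := quasi_mono f hfpos hM
  have hxpos := sol_pos f g x ξ hf_zero hg_pos hξ hx
  have hx0 : Tendsto x atTop (𝓝[>] 0) :=
    tendsto_nhdsWithin_of_tendsto_nhds_of_eventually_within _ hx_to0 hxpos
  have hut : Tendsto (fun t => F (x t)) atTop atTop := hF_top.comp hx0
  have hh : ∀ᶠ t in atTop, 0 < (fun t => f (Finv t)) t := by
    filter_upwards [eventually_ge_atTop 0] with t ht
    exact hfpos _ (hFinv t ht).1
  have hgpos : ∀ᶠ t in atTop, 0 < g t := by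
    filter_upwards [eventually_gt_atTop 0] with t ht
    exact hg_pos t ht
  have hqm : ∀ ε > 0, ∃ R, ∀ r s, R ≤ r → r ≤ s →
      (fun t => f (Finv t)) s ≤ (1 + ε) * (fun t => f (Finv t)) r := by
    intro ε hε
    obtain ⟨d, hd, hq⟩ := hqf ε hε
    obtain ⟨R, hR⟩ := eventually_atTop.1
      ((hFinv_to0.eventually_lt_const hd).and (eventually_ge_atTop 0))
    refine ⟨R, fun r s hr hrs => ?_⟩
    obtain ⟨h1, h2⟩ := hR r hr
    obtain ⟨h3, h4⟩ := hFinv r h2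
    obtain ⟨h5, h6⟩ := hFinv s (h2.trans hrs)
    refine hq _ _ h5 ?_ h1
    rw [← hF_anti.le_iff_ge h3 h5, h4, h6]
    exact hrs
  have hu : ∀ᶠ t in atTop, HasDerivAt (fun t => F (x t))
      (1 - g t / (fun t => f (Finv t)) ((fun t => F (x t)) t)) t := by
    filter_upwards [hxpos, hut.eventually_ge_atTop 0, eventually_gt_atTop 0] with t h1 h2 h3
    obtain ⟨h4, h5⟩ := hFinv _ h2
    have h6 : Finv (F (x t)) = x t := hF_anti.injOn h4 h1 h5
    have h7 := HasDerivAt.comp t (hF' (x t) h1) (hx.2.2 t h3)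
    refine h7.congr_deriv ?_
    simp only [h6]
    have := hfpos _ h1
    field_simp
    ring
  have hcomp : ∀ β : ℝ, 1 < β → RVat0 f β →
      RVatInf (fun t => f (Finv t)) (-(β / (β - 1))) := fun β hβ hrv =>
    comp_rv f F Finv β hβ hfpos hF' hF_top hF_anti hFinv hFinv0 hqf hrv
  obtain ⟨γ, hγ, hrvγ⟩ : ∃ γ : ℝ, 0 < γ ∧ RVatInf (fun t => f (Finv t)) (-γ) := by
    rcases hreg with ⟨β, hβ, hrv⟩ | hrv
    · exact ⟨β / (β - 1), div_pos (by linarith) (by linarith), hcomp β hβ hrv⟩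
    · exact ⟨1, one_pos, hrv⟩
  refine ⟨fun hg => ?_, fun L hL hg => ⟨fun β hβ hrv Λ hΛ hΛL => ?_, fun hrv => ?_⟩, fun hg => ?_⟩
  · exact conv_finite _ g _ γ 0 1 hγ le_rfl one_pos (by simp) hu hut hh hqm hgpos hrvγ hg
  · have hΛ0 : 0 < Λ := hΛ.1
    refine conv_finite _ g _ (β / (β - 1)) L Λ (div_pos (by linarith) (by linarith)) hL.le hΛ0 ?_
      hu hut hh hqm hgpos (hcomp β hβ hrv) hg
    rw [← hΛL, mul_assoc, ← rpow_add hΛ0, neg_div, neg_add_cancel, rpow_zero]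
    ring
  · refine conv_finite _ g _ 1 L (1 / (1 + L)) one_pos hL.le (by positivity) ?_
      hu hut hh hqm hgpos hrv hg
    rw [rpow_one]
    field_simp
    ring
  · exact conv_inf _ g _ γ hu hut hh hqm hrvγ hg
end
end
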